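/- arXiv:1806.04901 — 2 statements merged into one kernel-verified Lean document; each statement's English description precedes it below -/
import Mathlib

section
/- Let 1 ≤ p < ∞ and let α > −N be a real number. Then for every u ∈ C_c^∞(ℝ^N ∖ {0}), ((N + α)/p)^p · ∫_{ℝ^N} H⁰(x)^α |u(x)|^p dx ≤ ∫_{ℝ^N} H⁰(x)^{α+p} |(x/H⁰(x)) · ∇u(x)|^p dx. -/
open MeasureTheory Set Filter
open scoped RealInnerProductSpace Topology ENNReal NNReal

noncomputable section

/-- `ℝ^N` as a Euclidean space. -/
abbrev Euc (N : ℕ) := EuclideanSpace ℝ (Fin N)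

/-- `H : ℝ^N → ℝ` is a Finsler norm: nonnegative, convex, `C²` away from the origin,
even and positively one-homogeneous, comparable to the Euclidean norm, and with
positive definite Hessian of `H²` away from the origin. -/
structure IsFinslerNorm {N : ℕ} (H : Euc N → ℝ) : Prop where
  nonneg : ∀ ξ, 0 ≤ H ξ
  convexOn : ConvexOn ℝ Set.univ H
  smooth : ContDiffOn ℝ 2 H {(0 : Euc N)}ᶜ
  homog : ∀ (t : ℝ) (ξ : Euc N), H (t • ξ) = |t| * H ξ
  bounds : ∃ a b : ℝ, 0 < a ∧ a ≤ b ∧ ∀ ξ : Euc N, a * ‖ξ‖ ≤ H ξ ∧ H ξ ≤ b * ‖ξ‖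
  hessPosDef : ∀ ξ : Euc N, ξ ≠ 0 → ∀ v : Euc N, v ≠ 0 →
    0 < iteratedFDeriv ℝ 2 (fun x => (H x) ^ 2) ξ ![v, v]

/-- The polar function `H⁰(x) = sup_{ξ ≠ 0} (ξ·x)/H(ξ)` of a Finsler norm. -/
def polarNorm {N : ℕ} (H : Euc N → ℝ) (x : Euc N) : ℝ :=
  sSup {r : ℝ | ∃ ξ : Euc N, ξ ≠ 0 ∧ r = ⟪ξ, x⟫ / H ξ}

/-- `u ∈ C_c^∞(Ω)`: a smooth function with compact support contained in `Ω`. -/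
def IsTestFun {N : ℕ} (Ω : Set (Euc N)) (u : Euc N → ℝ) : Prop :=
  ContDiff ℝ (⊤ : ℕ∞) u ∧ HasCompactSupport u ∧ tsupport u ⊆ Ω

/-!
The Euler operator `x · ∇` generates the dilations `u ↦ u (s x)`, so the inequality is the
infinitesimal form of a scaling law. Under a measure `ν` that is homogeneous of degree `d`, dilating
`u` by `s` multiplies `‖u‖_{L^p(ν)}` by `s ^ (-d / p)`. The reverse triangle inequality gives

`|s ^ (-d / p) - 1| / |s - 1| * ‖u‖ ≤ ‖(u (s ·) - u) / (s - 1)‖`,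

and letting `s → 1` turns this into `|d| / p * ‖u‖ ≤ ‖x · ∇u‖`. For the inequality with weight `H⁰`,
take `ν = (H⁰) ^ a dx`, which is homogeneous of degree `N + a`.
-/

section LpNorm

variable {α F : Type*} [MeasurableSpace α] {μ : Measure α} [NormedAddCommGroup F] {p : ℝ≥0∞}

lemma lpNorm_rpow_toReal {f : α → F} (hp₀ : p ≠ 0) (hp : p ≠ ∞) (hf : AEStronglyMeasurable f μ) :
    lpNorm f p μ ^ p.toReal = ∫ x, ‖f x‖ ^ p.toReal ∂μ := by
  rw [lpNorm_eq_integral_norm_rpow_toReal hp₀ hp hf,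
    Real.rpow_inv_rpow (integral_nonneg fun x => by positivity) (ENNReal.toReal_pos hp₀ hp).ne']

lemma abs_lpNorm_sub_lpNorm_le {f g : α → F} (hf : MemLp f p μ) (hg : MemLp g p μ) (hp : 1 ≤ p) :
    |lpNorm f p μ - lpNorm g p μ| ≤ lpNorm (f - g) p μ :=
  abs_sub_le_iff.2 ⟨sub_le_iff_le_add'.2 (lpNorm_le_lpNorm_add_lpNorm_sub' hg hp),
    sub_le_iff_le_add'.2 (lpNorm_le_lpNorm_add_lpNorm_sub hf hp)⟩

lemma tendsto_lpNorm_of_dominated {ι : Type*} {l : Filter ι} [l.NeBot] [l.IsCountablyGenerated]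
    {f : ι → α → F} {g : α → F} {bound : α → ℝ} (hp₀ : p ≠ 0) (hp : p ≠ ∞)
    (hf : ∀ i, AEStronglyMeasurable (f i) μ) (hbound : MemLp bound p μ)
    (hf_le : ∀ᶠ i in l, ∀ᵐ x ∂μ, ‖f i x‖ ≤ bound x)
    (hlim : ∀ᵐ x ∂μ, Tendsto (f · x) l (𝓝 (g x))) :
    Tendsto (fun i => lpNorm (f i) p μ) l (𝓝 (lpNorm g p μ)) := by
  have hg : AEStronglyMeasurable g μ := aestronglyMeasurable_of_tendsto_ae l hf hlim
  simp only [lpNorm_eq_integral_norm_rpow_toReal hp₀ hp, hf, hg]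
  refine Tendsto.rpow_const ?_ (Or.inr (by positivity))
  refine tendsto_integral_filter_of_dominated_convergence (fun x => ‖bound x‖ ^ p.toReal)
    (Eventually.of_forall fun i => ?_) ?_ (hbound.integrable_norm_rpow hp₀ hp) ?_
  · exact (Real.continuous_rpow_const p.toReal_nonneg).comp_aestronglyMeasurable (hf i).norm
  · filter_upwards [hf_le] with i hi
    filter_upwards [hi] with x hx
    rw [Real.norm_of_nonneg (by positivity)]
    gcongr
    exact hx.trans (le_abs_self _)
  · filter_upwards [hlim] with x hx
    exact hx.norm.rpow_const (Or.inr p.toReal_nonneg)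

end LpNorm

section Dilation

variable {E F : Type*} [NormedAddCommGroup E] [NormedSpace ℝ E] [NormedAddCommGroup F]

lemma exists_isCompact_forall_dilation_eq_zero {u : E → F} (hu : HasCompactSupport u)
    (hu₀ : 0 ∉ tsupport u) :
    ∃ K : Set E, IsCompact K ∧ 0 ∉ K ∧ ∀ x ∉ K, ∀ s ∈ Icc (1 / 2 : ℝ) 2, u (s • x) = 0 := by
  have hs₀ : ∀ s ∈ Icc (1 / 2 : ℝ) 2, s ≠ 0 := fun s hs => by linarith [hs.1]
  refine ⟨(fun q : ℝ × E => q.1⁻¹ • q.2) '' (Icc (1 / 2) 2 ×ˢ tsupport u), ?_, ?_, ?_⟩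
  · refine (isCompact_Icc.prod hu.isCompact).image_of_continuousOn ?_
    exact (continuousOn_fst.inv₀ fun q hq => hs₀ q.1 hq.1).smul continuousOn_snd
  · rintro ⟨⟨s, y⟩, ⟨hs, hy⟩, h⟩
    rcases smul_eq_zero.1 h with h | rfl
    exacts [inv_ne_zero (hs₀ s hs) h, hu₀ hy]
  · intro x hx s hs
    by_contra hne
    exact hx ⟨(s, s • x), ⟨hs, subset_tsupport u hne⟩, inv_smul_smul₀ (hs₀ s hs) x⟩

variable [NormedSpace ℝ F]

lemma hasDerivAt_dilation {u : E → F} {x : E} (hu : DifferentiableAt ℝ u x) :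
    HasDerivAt (fun s : ℝ => u (s • x)) (fderiv ℝ u x x) 1 := by
  have hline : HasDerivAt (fun s : ℝ => s • x) x 1 := by
    simpa using (hasDerivAt_id (1 : ℝ)).smul_const x
  exact HasFDerivAt.comp_hasDerivAt (1 : ℝ) (by simpa using hu.hasFDerivAt) hline

lemma norm_slope_dilation_le {u : E → F} {C : ℝ≥0} (hu : LipschitzWith C u) (x : E) {s : ℝ}
    (hs : s ≠ 1) : ‖slope (fun t : ℝ => u (t • x)) 1 s‖ ≤ C * ‖x‖ := by
  have hs' : 0 < ‖s - 1‖ := norm_pos_iff.2 (sub_ne_zero.2 hs)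
  have hlip : ‖u (s • x) - u x‖ ≤ C * (‖s - 1‖ * ‖x‖) := by
    rw [← norm_smul, sub_smul, one_smul, ← dist_eq_norm, ← dist_eq_norm]
    exact hu.dist_le_mul _ _
  rw [slope_def_module, norm_smul, norm_inv, one_smul, inv_mul_le_iff₀ hs']
  linarith

end Dilation

section HomogeneousMeasure

variable {E F : Type*} [NormedAddCommGroup E] [NormedSpace ℝ E] [MeasurableSpace E]
  [NormedAddCommGroup F] {p : ℝ≥0∞}

/-- A measure `ν` on a normed space that is homogeneous of degree `d` under dilations, i.e.
`ν (s • A) = s ^ d * ν A` for `s > 0`, and finite on the compact sets that avoid the origin. The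
scaling law is stated for the image of `ν` under `x ↦ s • x`, hence the exponent `-d`. -/
structure IsHomogeneousMeasure (ν : Measure E) (d : ℝ) : Prop where
  map_smul : ∀ ⦃s : ℝ⦄, 0 < s → ν.map (s • ·) = ENNReal.ofReal (s ^ (-d)) • ν
  lt_top_of_isCompact : ∀ ⦃K : Set E⦄, IsCompact K → 0 ∉ K → ν K < ∞

namespace IsHomogeneousMeasure

variable [BorelSpace E] {ν : Measure E} {d : ℝ}

lemma memLp_indicator_const (hν : IsHomogeneousMeasure ν d) {K : Set E} (hK : IsCompact K)
    (hK₀ : 0 ∉ K) (c : F) : MemLp (K.indicator fun _ => c) p ν :=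
  MeasureTheory.memLp_indicator_const p hK.measurableSet c
    (Or.inr (hν.lt_top_of_isCompact hK hK₀).ne)

lemma memLp_of_hasCompactSupport (hν : IsHomogeneousMeasure ν d) {u : E → F} (hu : Continuous u)
    (hsupp : HasCompactSupport u) (hu₀ : 0 ∉ tsupport u) : MemLp u p ν := by
  obtain ⟨C, hC⟩ := hsupp.exists_bound_of_continuous hu
  refine (hν.memLp_indicator_const hsupp.isCompact hu₀ C).mono'
    (hu.stronglyMeasurable_of_hasCompactSupport hsupp).aestronglyMeasurable
    (Eventually.of_forall fun x => ?_)
  by_cases hx : x ∈ tsupport u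
  · simpa [hx] using hC x
  · simp [hx, image_eq_zero_of_notMem_tsupport hx]

lemma memLp_dilation (hν : IsHomogeneousMeasure ν d) {f : E → F} (hf : MemLp f p ν) {s : ℝ}
    (hs : 0 < s) : MemLp (fun x => f (s • x)) p ν := by
  refine MemLp.comp_of_map ?_ (measurable_const_smul s).aemeasurable
  rw [hν.map_smul hs]
  exact hf.smul_measure ENNReal.ofReal_ne_top

lemma lpNorm_dilation (hν : IsHomogeneousMeasure ν d) (hp : p ≠ ∞) {f : E → F}
    (hf : MemLp f p ν) {s : ℝ} (hs : 0 < s) :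
    lpNorm (fun x => f (s • x)) p ν = s ^ (-d / p.toReal) * lpNorm f p ν := by
  have hf_map : AEStronglyMeasurable f (ν.map (s • ·)) := by
    rw [hν.map_smul hs]
    exact hf.1.smul_measure _
  have hscale : eLpNorm (fun x => f (s • x)) p ν
      = ENNReal.ofReal (s ^ (-d)) ^ (1 / p).toReal * eLpNorm f p ν := by
    rw [← smul_eq_mul, ← eLpNorm_smul_measure_of_ne_top hp, ← hν.map_smul hs]
    exact (eLpNorm_map_measure hf_map (measurable_const_smul s).aemeasurable).symm
  rw [← toReal_eLpNorm (hν.memLp_dilation hf hs).1, ← toReal_eLpNorm hf.1, hscale,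
    ENNReal.toReal_mul, ← ENNReal.toReal_rpow, ENNReal.toReal_ofReal (by positivity),
    ← Real.rpow_mul hs.le, one_div, ENNReal.toReal_inv, ← div_eq_mul_inv]

variable [NormedSpace ℝ F] {u : E → F}

lemma tendsto_lpNorm_slope_dilation (hν : IsHomogeneousMeasure ν d) (hp₀ : p ≠ 0) (hp : p ≠ ∞)
    (hu : ContDiff ℝ 1 u) (hsupp : HasCompactSupport u) (hu₀ : 0 ∉ tsupport u) :
    Tendsto (fun s => lpNorm (fun x => slope (fun t : ℝ => u (t • x)) 1 s) p ν) (𝓝[≠] 1)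
      (𝓝 (lpNorm (fun x => fderiv ℝ u x x) p ν)) := by
  obtain ⟨K, hK, hK₀, hK_zero⟩ := exists_isCompact_forall_dilation_eq_zero hsupp hu₀
  obtain ⟨R, hR⟩ := hK.isBounded.exists_norm_le
  obtain ⟨C, hC⟩ := hu.lipschitzWith_of_hasCompactSupport hsupp one_ne_zero
  have hu_meas := hu.continuous.stronglyMeasurable_of_hasCompactSupport hsupp
  refine tendsto_lpNorm_of_dominated hp₀ hp (fun s => ?_)
    (hν.memLp_indicator_const hK hK₀ (C * R : ℝ)) ?_ (Eventually.of_forall fun x =>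
      (hasDerivAt_dilation (hu.differentiable one_ne_zero x)).tendsto_slope)
  · simp only [slope_def_module, one_smul]
    exact (((hu_meas.comp_measurable (measurable_const_smul s)).sub hu_meas).const_smul
      _).aestronglyMeasurable
  · have hnear : ∀ᶠ s : ℝ in 𝓝[≠] 1, s ∈ Icc (1 / 2 : ℝ) 2 :=
      nhdsWithin_le_nhds (Icc_mem_nhds (by norm_num) (by norm_num))
    filter_upwards [hnear, self_mem_nhdsWithin] with s hs hs₁
    refine Eventually.of_forall fun x => ?_
    by_cases hx : x ∈ K
    · rw [indicator_of_mem hx]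
      exact (norm_slope_dilation_le hC x hs₁).trans (by gcongr; exact hR x hx)
    · have hs_zero : u (s • x) = 0 := hK_zero x hx s hs
      have hone_zero : u x = 0 := by simpa using hK_zero x hx 1 (by norm_num)
      simp [slope_def_module, hs_zero, hone_zero, hx]

lemma norm_slope_rpow_mul_lpNorm_le (hν : IsHomogeneousMeasure ν d) (hp₁ : 1 ≤ p) (hp : p ≠ ∞)
    {f : E → F} (hf : MemLp f p ν) {s : ℝ} (hs : 0 < s) :
    ‖slope (fun t : ℝ => t ^ (-d / p.toReal)) 1 s‖ * lpNorm f p ν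
      ≤ lpNorm (fun x => slope (fun t : ℝ => f (t • x)) 1 s) p ν := by
  have hslope : (fun x => slope (fun t : ℝ => f (t • x)) 1 s)
      = (s - 1)⁻¹ • ((fun x => f (s • x)) - f) := by
    ext x
    simp [slope_def_module]
  calc ‖slope (fun t : ℝ => t ^ (-d / p.toReal)) 1 s‖ * lpNorm f p ν
      = ‖(s - 1)⁻¹‖ * |lpNorm (fun x => f (s • x)) p ν - lpNorm f p ν| := by
        rw [hν.lpNorm_dilation hp hf hs, ← sub_one_mul, abs_mul, abs_of_nonneg lpNorm_nonneg,
          slope_def_module, norm_smul, Real.one_rpow, Real.norm_eq_abs (s ^ _ - 1), mul_assoc]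
    _ ≤ ‖(s - 1)⁻¹‖ * lpNorm ((fun x => f (s • x)) - f) p ν := by
        gcongr
        exact abs_lpNorm_sub_lpNorm_le (hν.memLp_dilation hf hs) hf hp₁
    _ = lpNorm (fun x => slope (fun t : ℝ => f (t • x)) 1 s) p ν := by
        rw [hslope, lpNorm_const_smul, coe_nnnorm]

theorem lpNorm_le_lpNorm_fderiv_self (hν : IsHomogeneousMeasure ν d) (hp₁ : 1 ≤ p) (hp : p ≠ ∞)
    (hu : ContDiff ℝ 1 u) (hsupp : HasCompactSupport u) (hu₀ : 0 ∉ tsupport u) :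
    |d| / p.toReal * lpNorm u p ν ≤ lpNorm (fun x => fderiv ℝ u x x) p ν := by
  have hderiv : HasDerivAt (fun s : ℝ => s ^ (-d / p.toReal)) (-d / p.toReal) 1 := by
    simpa using Real.hasDerivAt_rpow_const (x := 1) (p := -d / p.toReal) (Or.inl one_ne_zero)
  have hleft : Tendsto (fun s => ‖slope (fun t : ℝ => t ^ (-d / p.toReal)) 1 s‖ * lpNorm u p ν)
      (𝓝[≠] 1) (𝓝 (|d| / p.toReal * lpNorm u p ν)) := by
    simpa using hderiv.tendsto_slope.norm.mul_const (lpNorm u p ν)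
  have hpos : ∀ᶠ s : ℝ in 𝓝[≠] 1, 0 < s := nhdsWithin_le_nhds (Ioi_mem_nhds one_pos)
  refine le_of_tendsto_of_tendsto hleft
    (hν.tendsto_lpNorm_slope_dilation (one_pos.trans_le hp₁).ne' hp hu hsupp hu₀)
    (hpos.mono fun s hs => ?_)
  exact hν.norm_slope_rpow_mul_lpNorm_le hp₁ hp
    (hν.memLp_of_hasCompactSupport hu.continuous hsupp hu₀) hs

theorem integral_norm_rpow_le (hν : IsHomogeneousMeasure ν d) {p : ℝ} (hp : 1 ≤ p)
    (hu : ContDiff ℝ 1 u) (hsupp : HasCompactSupport u) (hu₀ : 0 ∉ tsupport u) :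
    (|d| / p) ^ p * ∫ x, ‖u x‖ ^ p ∂ν ≤ ∫ x, ‖fderiv ℝ u x x‖ ^ p ∂ν := by
  have hp₀ : 0 < p := one_pos.trans_le hp
  have hq₀ : ENNReal.ofReal p ≠ 0 := (ENNReal.ofReal_pos.2 hp₀).ne'
  have hu_meas := (hu.continuous.stronglyMeasurable_of_hasCompactSupport hsupp).aestronglyMeasurable
    (μ := ν)
  have hEuler_cont : Continuous fun x => fderiv ℝ u x x :=
    (hu.continuous_fderiv one_ne_zero).clm_apply continuous_id
  have hEuler_supp : HasCompactSupport fun x => fderiv ℝ u x x :=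
    (hsupp.fderiv ℝ).mono fun x hx => by
      contrapose! hx
      simp_all
  have hEuler_meas := (hEuler_cont.stronglyMeasurable_of_hasCompactSupport
    hEuler_supp).aestronglyMeasurable (μ := ν)
  have hlp := hν.lpNorm_le_lpNorm_fderiv_self (p := ENNReal.ofReal p) (by simpa using hp)
    ENNReal.ofReal_ne_top hu hsupp hu₀
  have hpow := Real.rpow_le_rpow (mul_nonneg (by positivity) lpNorm_nonneg) hlp
    (ENNReal.ofReal p).toReal_nonneg
  rwa [Real.mul_rpow (by positivity) lpNorm_nonneg,
    lpNorm_rpow_toReal hq₀ ENNReal.ofReal_ne_top hu_meas,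
    lpNorm_rpow_toReal hq₀ ENNReal.ofReal_ne_top hEuler_meas, ENNReal.toReal_ofReal hp₀.le] at hpow

end IsHomogeneousMeasure

end HomogeneousMeasure

section HomogeneousWeight

variable {E F : Type*} [NormedAddCommGroup E] [NormedSpace ℝ E] [FiniteDimensional ℝ E]
  [MeasurableSpace E] [BorelSpace E] [NormedAddCommGroup F] [NormedSpace ℝ F]
  {w : E → ℝ} {a : ℝ}

open Module (finrank)

variable (μ : Measure E) [μ.IsAddHaarMeasure]

lemma isHomogeneousMeasure_withDensity (hw : ContinuousOn w {0}ᶜ)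
    (hw_smul : ∀ ⦃s : ℝ⦄, 0 < s → ∀ x, w (s • x) = s ^ a * w x) :
    IsHomogeneousMeasure (μ.withDensity fun x => ENNReal.ofReal (w x)) (finrank ℝ E + a) where
  map_smul s hs := by
    have hw_meas : Measurable fun x => ENNReal.ofReal (w x) :=
      (measurable_of_continuousOn_compl_singleton 0 hw).ennreal_ofReal
    have hw_inv : ∀ x, ENNReal.ofReal (w x)
        = ENNReal.ofReal (s ^ (-a)) * ENNReal.ofReal (w (s • x)) := fun x => by
      rw [← ENNReal.ofReal_mul (by positivity), hw_smul hs, ← mul_assoc, ← Real.rpow_add hs,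
        neg_add_cancel, Real.rpow_zero, one_mul]
    have hscale : ENNReal.ofReal (s ^ (-a)) * ENNReal.ofReal |(s ^ finrank ℝ E)⁻¹|
        = ENNReal.ofReal (s ^ (-(finrank ℝ E + a))) := by
      rw [← ENNReal.ofReal_mul (by positivity), abs_of_nonneg (by positivity), neg_add_rev,
        Real.rpow_add hs, Real.rpow_neg hs.le (finrank ℝ E : ℝ), Real.rpow_natCast]
    ext A hA
    calc (μ.withDensity fun x => ENNReal.ofReal (w x)).map (s • ·) A
        = ∫⁻ x in (s • ·) ⁻¹' A, ENNReal.ofReal (w x) ∂μ := by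
          rw [Measure.map_apply (measurable_const_smul s) hA,
            withDensity_apply _ (measurable_const_smul s hA)]
      _ = ENNReal.ofReal (s ^ (-a)) * ∫⁻ x in (s • ·) ⁻¹' A, ENNReal.ofReal (w (s • x)) ∂μ :=
          (lintegral_congr hw_inv).trans (lintegral_const_mul' _ _ ENNReal.ofReal_ne_top)
      _ = ENNReal.ofReal (s ^ (-a)) * ∫⁻ x in A, ENNReal.ofReal (w x) ∂(μ.map (s • ·)) := by
          rw [setLIntegral_map hA hw_meas (measurable_const_smul s)]
      _ = (ENNReal.ofReal (s ^ (-(finrank ℝ E + a))) •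
            μ.withDensity fun x => ENNReal.ofReal (w x)) A := by
          rw [Measure.map_addHaar_smul μ hs.ne', setLIntegral_smul_measure, Measure.smul_apply,
            withDensity_apply _ hA, smul_eq_mul, smul_eq_mul, ← mul_assoc, hscale]
  lt_top_of_isCompact K hK hK₀ := by
    rw [withDensity_apply _ hK.measurableSet]
    exact ((hw.mono fun x hx h => hK₀ (h ▸ hx)).integrableOn_compact hK).lintegral_lt_top

theorem hardy_of_homogeneous_weight (hw : ContinuousOn w {0}ᶜ) (hw_nonneg : ∀ x, 0 ≤ w x)
    (hw_smul : ∀ ⦃s : ℝ⦄, 0 < s → ∀ x, w (s • x) = s ^ a * w x) {p : ℝ} (hp : 1 ≤ p)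
    {u : E → F} (hu : ContDiff ℝ 1 u) (hsupp : HasCompactSupport u) (hu₀ : 0 ∉ tsupport u) :
    (|finrank ℝ E + a| / p) ^ p * ∫ x, w x * ‖u x‖ ^ p ∂μ
      ≤ ∫ x, w x * ‖fderiv ℝ u x x‖ ^ p ∂μ := by
  have hw_meas : Measurable fun x => ENNReal.ofReal (w x) :=
    (measurable_of_continuousOn_compl_singleton 0 hw).ennreal_ofReal
  have hintegral : ∀ f : E → ℝ,
      ∫ x, f x ∂(μ.withDensity fun x => ENNReal.ofReal (w x)) = ∫ x, w x * f x ∂μ := fun f => by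
    rw [integral_withDensity_eq_integral_toReal_smul hw_meas (by simp)]
    simp only [ENNReal.toReal_ofReal, hw_nonneg, smul_eq_mul]
  simpa only [hintegral] using
    (isHomogeneousMeasure_withDensity μ hw hw_smul).integral_norm_rpow_le hp hu hsupp hu₀

end HomogeneousWeight

section PolarNorm

variable {N : ℕ} {H : Euc N → ℝ} {c : ℝ}

open scoped Pointwise in
lemma polarNorm_smul {t : ℝ} (ht : 0 ≤ t) (x : Euc N) :
    polarNorm H (t • x) = t * polarNorm H x := by
  have hset : {r : ℝ | ∃ ξ : Euc N, ξ ≠ 0 ∧ r = ⟪ξ, t • x⟫ / H ξ}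
      = t • {r : ℝ | ∃ ξ : Euc N, ξ ≠ 0 ∧ r = ⟪ξ, x⟫ / H ξ} := by
    ext r
    simp only [mem_ofPred_eq, mem_smul_set, inner_smul_right, mul_div_assoc, smul_eq_mul]
    grind
  rw [polarNorm, hset, Real.sSup_smul_of_nonneg ht, smul_eq_mul, polarNorm]

lemma polarNorm_le {x : Euc N} {M : ℝ} (hM : 0 ≤ M)
    (h : ∀ ξ : Euc N, ξ ≠ 0 → ⟪ξ, x⟫ / H ξ ≤ M) : polarNorm H x ≤ M :=
  Real.sSup_le (by rintro _ ⟨ξ, hξ, rfl⟩; exact h ξ hξ) hM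

lemma inner_div_le_inv_mul_norm (hc : 0 < c) (hH : ∀ ξ, c * ‖ξ‖ ≤ H ξ) (ξ x : Euc N) :
    ⟪ξ, x⟫ / H ξ ≤ c⁻¹ * ‖x‖ := by
  refine div_le_of_le_mul₀ ((by positivity : 0 ≤ c * ‖ξ‖).trans (hH ξ)) (by positivity) ?_
  calc ⟪ξ, x⟫ ≤ ‖ξ‖ * ‖x‖ := real_inner_le_norm ξ x
    _ = c⁻¹ * ‖x‖ * (c * ‖ξ‖) := by field_simp
    _ ≤ c⁻¹ * ‖x‖ * H ξ := by gcongr; exact hH ξ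

lemma inner_div_le_polarNorm (hc : 0 < c) (hH : ∀ ξ, c * ‖ξ‖ ≤ H ξ) {ξ : Euc N} (hξ : ξ ≠ 0)
    (x : Euc N) : ⟪ξ, x⟫ / H ξ ≤ polarNorm H x := by
  refine le_csSup ⟨c⁻¹ * ‖x‖, ?_⟩ ⟨ξ, hξ, rfl⟩
  rintro _ ⟨η, -, rfl⟩
  exact inner_div_le_inv_mul_norm hc hH η x

lemma polarNorm_pos (hc : 0 < c) (hH : ∀ ξ, c * ‖ξ‖ ≤ H ξ) {x : Euc N} (hx : x ≠ 0) :
    0 < polarNorm H x :=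
  have hHx : 0 < H x := (by positivity : 0 < c * ‖x‖).trans_le (hH x)
  (div_pos (real_inner_self_pos.2 hx) hHx).trans_le (inner_div_le_polarNorm hc hH hx x)

lemma polarNorm_nonneg (hc : 0 < c) (hH : ∀ ξ, c * ‖ξ‖ ≤ H ξ) (x : Euc N) :
    0 ≤ polarNorm H x := by
  rcases eq_or_ne x 0 with rfl | hx
  · simpa using (polarNorm_smul (H := H) le_rfl (0 : Euc N)).ge
  · exact (polarNorm_pos hc hH hx).le

lemma lipschitzWith_polarNorm (hc : 0 < c) (hH : ∀ ξ, c * ‖ξ‖ ≤ H ξ) :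
    LipschitzWith c⁻¹.toNNReal (polarNorm H) := by
  refine LipschitzWith.of_le_add_mul' c⁻¹ fun x y => ?_
  have hy := polarNorm_nonneg hc hH y
  refine polarNorm_le (by positivity) fun ξ hξ => ?_
  calc ⟪ξ, x⟫ / H ξ = ⟪ξ, y⟫ / H ξ + ⟪ξ, x - y⟫ / H ξ := by rw [inner_sub_right]; ring
    _ ≤ polarNorm H y + c⁻¹ * dist x y := by
      rw [dist_eq_norm]
      exact add_le_add (inner_div_le_polarNorm hc hH hξ y) (inner_div_le_inv_mul_norm hc hH ξ _)

end PolarNorm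

theorem finsler_weighted_hardy_poincare_polar_general {N : ℕ} {F : Type*} [NormedAddCommGroup F]
    [NormedSpace ℝ F] {H : Euc N → ℝ} {c : ℝ} (hc : 0 < c) (hH : ∀ ξ, c * ‖ξ‖ ≤ H ξ)
    {p : ℝ} (hp : 1 ≤ p) (a : ℝ) {u : Euc N → F} (hu : ContDiff ℝ 1 u)
    (hsupp : HasCompactSupport u) (hu₀ : 0 ∉ tsupport u) :
    (|(N : ℝ) + a| / p) ^ p * ∫ x, polarNorm H x ^ a * ‖u x‖ ^ p
      ≤ ∫ x, polarNorm H x ^ (a + p) * ‖fderiv ℝ u x ((polarNorm H x)⁻¹ • x)‖ ^ p := by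
  have hnonneg := polarNorm_nonneg hc hH
  have hradial : ∀ x, polarNorm H x ^ (a + p) * ‖fderiv ℝ u x ((polarNorm H x)⁻¹ • x)‖ ^ p
      = polarNorm H x ^ a * ‖fderiv ℝ u x x‖ ^ p := fun x => by
    rcases eq_or_ne x 0 with rfl | hx
    · simp [Real.zero_rpow (one_pos.trans_le hp).ne']
    · have hpos := polarNorm_pos hc hH hx
      rw [map_smul, norm_smul, norm_inv, Real.norm_of_nonneg (hnonneg x),
        Real.mul_rpow (by positivity) (by positivity), Real.inv_rpow (hnonneg x),
        Real.rpow_add hpos]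
      field_simp
  have hcont : ContinuousOn (fun x => polarNorm H x ^ a) {0}ᶜ :=
    (lipschitzWith_polarNorm hc hH).continuous.continuousOn.rpow_const
      fun x hx => Or.inl (polarNorm_pos hc hH hx).ne'
  have hhomog : ∀ ⦃s : ℝ⦄, 0 < s → ∀ x, polarNorm H (s • x) ^ a = s ^ a * polarNorm H x ^ a :=
    fun s hs x => by rw [polarNorm_smul hs.le, Real.mul_rpow hs.le (hnonneg x)]
  simpa only [hradial, finrank_euclideanSpace_fin] using hardy_of_homogeneous_weight volume hcont
    (fun x => Real.rpow_nonneg (hnonneg x) a) hhomog hp hu hsupp hu₀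

/-- Weighted anisotropic Hardy-Poincaré inequality with the weight H⁰(x). -/
theorem finsler_weighted_hardy_poincare_polar
    (N : ℕ) (hN : 2 ≤ N) (H : Euc N → ℝ) (hH : IsFinslerNorm H)
    (p : ℝ) (hp : 1 ≤ p)
    (a : ℝ) (ha : -(N : ℝ) < a)
    (u : Euc N → ℝ) (hu : IsTestFun {(0 : Euc N)}ᶜ u) :
    (((N : ℝ) + a) / p) ^ p * ∫ x, polarNorm H x ^ a * |u x| ^ p
      ≤ ∫ x, polarNorm H x ^ (a + p) *
          |⟪(polarNorm H x)⁻¹ • x, gradient u x⟫| ^ p := by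
  obtain ⟨c, _, hc, -, hcH⟩ := hH.bounds
  simpa [abs_of_pos (neg_lt_iff_pos_add'.1 ha), real_inner_smul_left] using
    finsler_weighted_hardy_poincare_polar_general hc (fun ξ => (hcH ξ).1) hp a
      (hu.1.of_le (by simp)) hu.2.1 fun h => hu.2.2 h rfl
end
end

section
/- Let N ≥ 2 and let ρ ∈ C¹(ℝ^N ∖ {0}) be positive and locally bounded on ℝ^N, with H(∇ρ(x)) = 1 for all x ≠ 0. Assume Δ_H ρ ≥ C/ρ in the distributional sense on ℝ^N for some constant C > 0, i.e. 1/ρ ∈ L¹_loc(ℝ^N) and −∫ (∇_ξ H)(∇ρ(x)) · ∇φ(x) dx ≥ ∫ (C/ρ(x)) φ(x) dx for every nonnegative φ ∈ C_c^∞(ℝ^N). Then for every u ∈ C_c^∞(ℝ^N), ((C + 1)/2)² · ( ∫_{ℝ^N} |u(x)|² dx )² ≤ ( ∫_{ℝ^N} ρ(x)² |u(x)|² dx ) · ( ∫_{ℝ^N} |(∇_ξ H)(∇ρ(x)) · ∇u(x)|² dx ). -/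
/-!
Put `X = (∇_ξ H)(∇ρ)`. It is bounded because `H` is Lipschitz, and Euler's identity with
`H(∇ρ) = 1` gives `X · ∇ρ = 1` off the origin. Testing `div X ≥ C / ρ` with `ρ u²` yields

  `C ∫ u² ≤ -∫ X · ∇(ρ u²) = -∫ u² - 2 ∫ ρ u (X · ∇u)`,

and the Cauchy–Schwarz inequality for `(C + 1) ∫ u² ≤ -2 ∫ ρ u (X · ∇u)` is the claim.

As `ρ u²` is merely bounded and `C¹` off the origin, test functions are enlarged twice: by
mollification to `C¹`, and by cutting off a ball of radius `r` to those which are bounded and `C¹`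
off the origin. The gradient of the cutoff has `L¹` norm of order `r ^ (N - 1)`, so that the origin
is removable in dimension `N ≥ 2`.
-/

open MeasureTheory Set Filter
open scoped RealInnerProductSpace Topology ENNReal NNReal

noncomputable section

open Metric Module
open scoped ContDiff Convolution Gradient

lemma sq_integral_mul_le {α : Type*} [MeasurableSpace α] {μ : Measure α} {f g : α → ℝ}
    (hf : MemLp f 2 μ) (hg : MemLp g 2 μ) :
    (∫ x, f x * g x ∂μ) ^ 2 ≤ (∫ x, f x ^ 2 ∂μ) * ∫ x, g x ^ 2 ∂μ := by
  have inner_toLp {p q : α → ℝ} (hp : MemLp p 2 μ) (hq : MemLp q 2 μ) :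
      ⟪hp.toLp p, hq.toLp q⟫ = ∫ x, p x * q x ∂μ := by
    rw [L2.inner_def]
    refine integral_congr_ae ?_
    filter_upwards [hp.coeFn_toLp, hq.coeFn_toLp] with x hpx hqx
    rw [hpx, hqx, real_inner_eq_re_inner, RCLike.inner_apply, RCLike.re_to_real, conj_trivial,
      mul_comm]
  simpa only [inner_toLp, ← sq] using real_inner_mul_inner_self_le (hf.toLp f) (hg.toLp g)

lemma bddAbove_image_of_isCompact_of_locally {α β : Type*} [TopologicalSpace α] [Preorder β]
    [Nonempty β] [IsDirectedOrder β] {f : α → β} {K : Set α} (hK : IsCompact K)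
    (hf : ∀ x ∈ K, ∃ U ∈ 𝓝 x, BddAbove (f '' U)) : BddAbove (f '' K) :=
  hK.induction_on (p := fun s => BddAbove (f '' s)) (by simp)
    (fun _ _ hst ht => ht.mono (image_mono hst))
    (fun _ _ hs ht => by simpa only [image_union] using hs.union ht)
    (fun x hx => (hf x hx).imp fun _ hU => ⟨mem_nhdsWithin_of_mem_nhds hU.1, hU.2⟩)

lemma aestronglyMeasurable_of_continuousOn_compl_singleton {α β : Type*} [TopologicalSpace α]
    [T1Space α] [SecondCountableTopology α] [MeasurableSpace α] [OpensMeasurableSpace α]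
    {μ : Measure α} [NullSingletonClass μ] [TopologicalSpace β]
    [TopologicalSpace.PseudoMetrizableSpace β] {f : α → β} {a : α}
    (hf : ContinuousOn f {a}ᶜ) : AEStronglyMeasurable f μ := by
  simpa only [restrict_compl_singleton] using
    hf.aestronglyMeasurable (μ := μ) (measurableSet_singleton a).compl

lemma fderiv_apply_self_of_posHomogeneous {E F : Type*} [NormedAddCommGroup E] [NormedSpace ℝ E]
    [NormedAddCommGroup F] [NormedSpace ℝ F] {f : E → F} {x : E} (hf : DifferentiableAt ℝ f x)
    (hom : ∀ t : ℝ, 0 < t → f (t • x) = t • f x) : fderiv ℝ f x x = f x := by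
  have hchain : HasDerivAt (fun t : ℝ => f (t • x)) (fderiv ℝ f x x) 1 :=
    HasFDerivAt.comp_hasDerivAt (f := fun t : ℝ => t • x) 1
      (by simpa only [one_smul] using hf.hasFDerivAt)
      (by simpa only [id, one_smul] using (hasDerivAt_id (1 : ℝ)).smul_const x)
  have hlin : HasDerivAt (fun t : ℝ => f (t • x)) (f x) 1 := by
    have hsmul : HasDerivAt (fun t : ℝ => t • f x) (f x) 1 := by
      simpa only [id, one_smul] using (hasDerivAt_id (1 : ℝ)).smul_const (f x)
    exact hsmul.congr_of_eventuallyEq ((lt_mem_nhds one_pos).mono hom)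
  exact hchain.unique hlin

lemma continuousOn_gradient_of_contDiffOn {E : Type*} [NormedAddCommGroup E]
    [InnerProductSpace ℝ E] [CompleteSpace E] {f : E → ℝ} {s : Set E} {n : WithTop ℕ∞}
    (hf : ContDiffOn ℝ n f s) (hs : IsOpen s) (hn : 1 ≤ n) : ContinuousOn (∇ f) s :=
  (InnerProductSpace.toDual ℝ E).symm.continuous.comp_continuousOn
    (hf.continuousOn_fderiv_of_isOpen hs hn)

lemma exists_forall_norm_mul_le_of_locally_bddAbove {E : Type*} [TopologicalSpace E] [Zero E]
    {ρ u : E → ℝ} (hρpos : ∀ x ≠ 0, 0 < ρ x)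
    (hρloc : ∀ x, ∃ U ∈ 𝓝 x, BddAbove (ρ '' U)) (hu : Continuous u) (huc : HasCompactSupport u) :
    ∃ M, ∀ x ≠ 0, ‖ρ x * u x‖ ≤ M := by
  obtain ⟨R, hR⟩ := bddAbove_image_of_isCompact_of_locally huc.isCompact fun x _ => hρloc x
  obtain ⟨A, hA⟩ := huc.exists_bound_of_continuous hu
  refine ⟨|R| * A, fun x hx => ?_⟩
  by_cases hxu : x ∈ tsupport u
  · have hρx : ‖ρ x‖ ≤ |R| := by
      rw [Real.norm_of_nonneg (hρpos x hx).le]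
      exact (hR (mem_image_of_mem ρ hxu)).trans (le_abs_self R)
    rw [norm_mul]
    exact mul_le_mul hρx (hA x) (norm_nonneg _) (abs_nonneg R)
  · rw [image_eq_zero_of_notMem_tsupport hxu, mul_zero, norm_zero]
    exact mul_nonneg (abs_nonneg R) ((norm_nonneg _).trans (hA x))

section NormedSpace

variable {E F : Type*} [NormedAddCommGroup E] [NormedSpace ℝ E] [NormedAddCommGroup F]
  [NormedSpace ℝ F]

lemma aestronglyMeasurable_clm_apply_of_continuous {α : Type*} [TopologicalSpace α]
    [SecondCountableTopology α] [MeasurableSpace α] [OpensMeasurableSpace α] {μ : Measure α}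
    {A : α → E →L[ℝ] F} (hA : Continuous A) {X : α → E} (hX : AEStronglyMeasurable X μ) :
    AEStronglyMeasurable (fun x => A x (X x)) μ :=
  (ContinuousLinearMap.id ℝ (E →L[ℝ] F)).aestronglyMeasurable_comp₂ hA.aestronglyMeasurable hX

lemma hasCompactSupport_fderiv_apply_comp {u : E → F} (hu : HasCompactSupport u) (X : E → E) :
    HasCompactSupport fun x => fderiv ℝ u x (X x) :=
  (hu.fderiv ℝ).mono fun x hx h => hx (by simp [h])

end NormedSpace

/-! ### Mollification -/

section Mollification

variable {E : Type*} [NormedAddCommGroup E] [NormedSpace ℝ E] [FiniteDimensional ℝ E]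
  [MeasurableSpace E] [BorelSpace E] {μ : Measure E} [μ.IsAddHaarMeasure]
  {F : Type*} [NormedAddCommGroup F] [NormedSpace ℝ F]

lemma exists_seq_contDiffBump_rOut_tendsto_zero (E : Type*) [NormedAddCommGroup E] :
    ∃ φ : ℕ → ContDiffBump (0 : E), Tendsto (fun n => (φ n).rOut) atTop (𝓝 0) :=
  ⟨fun n => ⟨1 / ((n : ℝ) + 1) / 2, 1 / ((n : ℝ) + 1), by positivity,
    half_lt_self (by positivity)⟩, tendsto_one_div_add_atTop_nhds_zero_nat⟩

lemma norm_normed_convolution_le_indicator [CompleteSpace F] {g : E → F}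
    (hg : AEStronglyMeasurable g μ) {M : ℝ} (hM : ∀ x, ‖g x‖ ≤ M) {φ : ContDiffBump (0 : E)}
    {δ : ℝ} (hφ : φ.rOut ≤ δ) (x : E) :
    ‖(φ.normed μ ⋆[ContinuousLinearMap.lsmul ℝ ℝ, μ] g) x‖ ≤
      (cthickening δ (tsupport g)).indicator (fun _ => M) x := by
  rw [← dist_zero_right]
  refine dist_convolution_le (indicator_nonneg (fun _ _ => (norm_nonneg _).trans (hM x)) x)
    φ.support_normed_eq.subset φ.nonneg_normed φ.integral_normed hg fun y hy => ?_
  rw [dist_zero_right]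
  by_cases hgy : g y = 0
  · simpa only [hgy, norm_zero] using
      indicator_nonneg (fun _ _ => (norm_nonneg _).trans (hM x)) x
  · have hx : x ∈ cthickening δ (tsupport g) :=
      mem_cthickening_of_dist_le x y δ _ (subset_tsupport g hgy)
        ((mem_ball'.1 hy).le.trans hφ)
    simpa only [indicator_of_mem hx] using hM y

variable {G G' : Type*} [NormedAddCommGroup G] [NormedSpace ℝ G] [NormedAddCommGroup G']
  [NormedSpace ℝ G']

lemma tendsto_integral_clm_normed_convolution [CompleteSpace F] (L : G →L[ℝ] F →L[ℝ] G')
    {h : E → G} (hh : LocallyIntegrable h μ) {g : E → F} (hg : Continuous g)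
    (hgc : HasCompactSupport g) {ι : Type*} {l : Filter ι} [l.IsCountablyGenerated]
    {φ : ι → ContDiffBump (0 : E)}
    (hφ : Tendsto (fun i => (φ i).rOut) l (𝓝 0)) :
    Tendsto
      (fun i => ∫ x, L (h x) (((φ i).normed μ ⋆[ContinuousLinearMap.lsmul ℝ ℝ, μ] g) x) ∂μ)
      l (𝓝 (∫ x, L (h x) (g x) ∂μ)) := by
  obtain ⟨M, hM⟩ := hgc.exists_bound_of_continuous hg
  set K := cthickening 1 (tsupport g)
  have hK : IsCompact K := hgc.isCompact.cthickening
  refine tendsto_integral_filter_of_dominated_convergence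
    (K.indicator fun x => ‖L‖ * ‖h x‖ * M) ?_ ?_ ?_ ?_
  · refine .of_forall fun i => L.aestronglyMeasurable_comp₂ hh.aestronglyMeasurable ?_
    exact (hgc.continuous_convolution_right _ (φ i).continuous_normed.locallyIntegrable
      hg).aestronglyMeasurable
  · filter_upwards [hφ.eventually (ge_mem_nhds one_pos)] with i hi
    filter_upwards with x
    calc _ ≤ ‖L‖ * ‖h x‖ * K.indicator (fun _ => M) x := (L.le_opNorm₂ _ _).trans <| by
            gcongr
            exact norm_normed_convolution_le_indicator hg.aestronglyMeasurable hM hi x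
      _ = K.indicator (fun x => ‖L‖ * ‖h x‖ * M) x := by
            by_cases hx : x ∈ K <;> simp [hx]
  · rw [integrable_indicator_iff hK.measurableSet]
    exact ((hh.integrableOn_isCompact hK).norm.const_mul _).mul_const M
  · exact .of_forall fun x => ((L (h x)).continuous.tendsto _).comp
      (ContDiffBump.convolution_tendsto_right_of_continuous hφ hg x)

lemma fderiv_normed_convolution {g : E → F} (hg : ContDiff ℝ 1 g) (hgc : HasCompactSupport g)
    (φ : ContDiffBump (0 : E)) :
    fderiv ℝ (φ.normed μ ⋆[ContinuousLinearMap.lsmul ℝ ℝ, μ] g) =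
      φ.normed μ ⋆[ContinuousLinearMap.lsmul ℝ ℝ, μ] fderiv ℝ g :=
  funext fun x => (hgc.hasFDerivAt_convolution_right _
    φ.continuous_normed.locallyIntegrable hg x).fderiv

/-- The inequality `div X ≥ w` in the weak sense, tested with the nonnegative compactly supported
functions of class `C^n`; `n = ∞` is the distributional inequality. The Bochner integrals are junk
where `w` or `X` fails to be locally integrable, so this is assumed separately. -/
def WeakDivGE (n : WithTop ℕ∞) (μ : Measure E) (X : E → E) (w : E → ℝ) : Prop :=
  ∀ φ : E → ℝ, ContDiff ℝ n φ → HasCompactSupport φ → (∀ x, 0 ≤ φ x) →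
    ∫ x, w x * φ x ∂μ ≤ -∫ x, fderiv ℝ φ x (X x) ∂μ

theorem WeakDivGE.of_smooth {X : E → E} {w : E → ℝ} (h : WeakDivGE ∞ μ X w)
    (hX : LocallyIntegrable X μ) (hw : LocallyIntegrable w μ) : WeakDivGE 1 μ X w := by
  intro ψ hψ hψc hψ0
  obtain ⟨φ, hφ⟩ := exists_seq_contDiffBump_rOut_tendsto_zero E
  have hmoll (n : ℕ) := h ((φ n).normed μ ⋆[ContinuousLinearMap.lsmul ℝ ℝ, μ] ψ)
    ((φ n).hasCompactSupport_normed.contDiff_convolution_left _ (φ n).contDiff_normed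
      hψ.continuous.locallyIntegrable)
    ((φ n).hasCompactSupport_normed.convolution _ hψc)
    (fun x => integral_nonneg fun y => mul_nonneg ((φ n).nonneg_normed y) (hψ0 _))
  simp only [fderiv_normed_convolution hψ hψc] at hmoll
  have hleft := tendsto_integral_clm_normed_convolution (.mul ℝ ℝ) hw hψ.continuous hψc hφ
  have hright := tendsto_integral_clm_normed_convolution (ContinuousLinearMap.id ℝ (E →L[ℝ] ℝ)).flip
    hX (hψ.continuous_fderiv one_ne_zero) (hψc.fderiv ℝ) hφ
  exact le_of_tendsto_of_tendsto' hleft hright.neg hmoll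

end Mollification

/-! ### Removing the origin -/

section OriginCutoff

variable {E : Type*} [NormedAddCommGroup E] [NormedSpace ℝ E] [FiniteDimensional ℝ E]
  {r : ℝ} {x : E}

/-- A smooth cutoff at scale `r`: it vanishes near the origin and is one outside the ball of
radius `2 * r`. -/
def originCutoff (r : ℝ) (x : E) : ℝ := 1 - (default : ContDiffBump (0 : E)) (r⁻¹ • x)

lemma contDiff_originCutoff {n : ℕ∞} : ContDiff ℝ n (originCutoff r : E → ℝ) :=
  contDiff_const.sub ((ContDiffBump.contDiff _).comp (contDiff_const_smul _))

lemma originCutoff_nonneg : 0 ≤ originCutoff r x := sub_nonneg.2 (ContDiffBump.le_one _)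

lemma norm_originCutoff_le_one : ‖originCutoff r x‖ ≤ 1 := by
  rw [Real.norm_of_nonneg originCutoff_nonneg]
  exact sub_le_self _ (ContDiffBump.nonneg _)

lemma originCutoff_eventuallyEq_zero : (originCutoff r : E → ℝ) =ᶠ[𝓝 0] 0 := by
  have hscale : Tendsto (fun x : E => r⁻¹ • x) (𝓝 0) (𝓝 0) := by
    simpa only [smul_zero] using (continuous_const_smul r⁻¹).tendsto (0 : E)
  filter_upwards [hscale.eventually (ContDiffBump.eventuallyEq_one default)] with x hx
  simp only [originCutoff, hx, Pi.one_apply, sub_self, Pi.zero_apply]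

lemma originCutoff_eq_one (hr : 0 < r) (hx : 2 * r ≤ ‖x‖) : originCutoff r x = 1 := by
  rw [originCutoff, ContDiffBump.zero_of_le_dist, sub_zero]
  change 2 ≤ dist (r⁻¹ • x) 0
  rwa [dist_zero_right, norm_smul, norm_inv, Real.norm_of_nonneg hr.le, le_inv_mul_iff₀ hr,
    mul_comm]

lemma fderiv_originCutoff_eq_zero (hr : 0 < r) (hx : 2 * r < ‖x‖) :
    fderiv ℝ (originCutoff r) x = 0 := by
  have hone : originCutoff r =ᶠ[𝓝 x] fun _ => (1 : ℝ) :=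
    ((continuous_norm.tendsto x).eventually (lt_mem_nhds hx)).mono fun y hy =>
      originCutoff_eq_one hr (le_of_lt hy)
  rw [hone.fderiv_eq, fderiv_fun_const, Pi.zero_apply]

lemma exists_norm_fderiv_originCutoff_le (E : Type*) [NormedAddCommGroup E] [NormedSpace ℝ E]
    [FiniteDimensional ℝ E] :
    ∃ D, ∀ r : ℝ, 0 < r → ∀ x : E, ‖fderiv ℝ (originCutoff r) x‖ ≤ D / r := by
  let f : ContDiffBump (0 : E) := default
  obtain ⟨D, hD⟩ := (f.hasCompactSupport.fderiv ℝ).exists_bound_of_continuous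
    ((f.contDiff (n := 1)).continuous_fderiv one_ne_zero)
  refine ⟨D, fun r hr x => ?_⟩
  calc ‖fderiv ℝ (originCutoff r) x‖ = r⁻¹ * ‖fderiv ℝ f (r⁻¹ • x)‖ := by
        unfold originCutoff
        rw [fderiv_const_sub, fderiv_comp_smul, norm_neg, norm_smul, norm_inv,
          Real.norm_of_nonneg hr.le]
    _ ≤ r⁻¹ * D := by gcongr; exact hD _
    _ = D / r := by rw [mul_comm, div_eq_mul_inv]

lemma tendsto_originCutoff (hx : x ≠ 0) :
    Tendsto (fun r => originCutoff r x) (𝓝[>] 0) (𝓝 1) := by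
  refine tendsto_const_nhds.congr' ?_
  filter_upwards [Ioo_mem_nhdsGT (half_pos (norm_pos_iff.2 hx))] with r hr
  exact (originCutoff_eq_one hr.1 (by linarith [hr.2])).symm

variable [MeasurableSpace E] {μ : Measure E}

lemma exists_ae_norm_fderiv_originCutoff_apply_le {X : E → E} {B : ℝ}
    (hB : ∀ᵐ x ∂μ, ‖X x‖ ≤ B) :
    ∃ D, ∀ r, 0 < r → ∀ᵐ x ∂μ, ‖fderiv ℝ (originCutoff r) x (X x)‖ ≤ D / r := by
  obtain ⟨D, hD⟩ := exists_norm_fderiv_originCutoff_le E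
  refine ⟨D * |B|, fun r hr => hB.mono fun x hx => ?_⟩
  calc ‖fderiv ℝ (originCutoff r) x (X x)‖ ≤ D / r * |B| :=
        ContinuousLinearMap.le_of_opNorm_le_of_le _ (hD r hr x) (hx.trans (le_abs_self B))
    _ = D * |B| / r := div_mul_eq_mul_div _ _ _

variable [BorelSpace E]

lemma integrable_originCutoff_mul {g : E → ℝ} (hg : Integrable g μ) :
    Integrable (fun x => originCutoff r x * g x) μ :=
  hg.bdd_mul (contDiff_originCutoff (n := 0)).continuous.aestronglyMeasurable
    (.of_forall fun _ => norm_originCutoff_le_one)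

lemma tendsto_integral_originCutoff_mul [NullSingletonClass μ] {g : E → ℝ} (hg : Integrable g μ) :
    Tendsto (fun r => ∫ x, originCutoff r x * g x ∂μ) (𝓝[>] 0) (𝓝 (∫ x, g x ∂μ)) := by
  refine tendsto_integral_filter_of_dominated_convergence (fun x => ‖g x‖)
    (.of_forall fun r => (integrable_originCutoff_mul hg).aestronglyMeasurable) ?_ hg.norm ?_
  · refine .of_forall fun r => .of_forall fun x => ?_
    rw [norm_mul]
    exact mul_le_of_le_one_left (norm_nonneg _) norm_originCutoff_le_one
  · filter_upwards [Measure.ae_ne μ 0] with x hx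
    simpa only [one_mul] using (tendsto_originCutoff hx).mul_const (g x)

variable [μ.IsAddHaarMeasure]

lemma tendsto_integral_mul_fderiv_originCutoff (hE : 2 ≤ finrank ℝ E) {X : E → E} {B : ℝ}
    (hB : ∀ᵐ x ∂μ, ‖X x‖ ≤ B) {ψ : E → ℝ} {M : ℝ} (hM : ∀ᵐ x ∂μ, ‖ψ x‖ ≤ M) :
    Tendsto (fun r => ∫ x, ψ x * fderiv ℝ (originCutoff r) x (X x) ∂μ) (𝓝[>] 0) (𝓝 0) := by
  obtain ⟨D, hD⟩ := exists_ae_norm_fderiv_originCutoff_apply_le hB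
  obtain ⟨d, hd, hdim⟩ : ∃ d, d ≠ 0 ∧ finrank ℝ E = d + 1 := ⟨finrank ℝ E - 1, by lia, by lia⟩
  set V := μ.real (closedBall (0 : E) 1)
  have hsmall : Tendsto (fun r : ℝ => |M| * D * 2 ^ (d + 1) * V * r ^ d) (𝓝[>] 0) (𝓝 0) := by
    have hcont : Continuous fun r : ℝ => |M| * D * 2 ^ (d + 1) * V * r ^ d := by fun_prop
    simpa only [zero_pow hd, mul_zero] using (hcont.tendsto 0).mono_left nhdsWithin_le_nhds
  refine squeeze_zero_norm' ?_ hsmall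
  filter_upwards [self_mem_nhdsWithin] with r (hr : 0 < r)
  have hsupp : ∀ x ∉ closedBall (0 : E) (2 * r),
      ψ x * fderiv ℝ (originCutoff r) x (X x) = 0 := fun x hx => by
    rw [mem_closedBall_zero_iff, not_le] at hx
    rw [fderiv_originCutoff_eq_zero hr hx, zero_apply, mul_zero]
  have hbound : ∀ᵐ x ∂μ, x ∈ closedBall (0 : E) (2 * r) →
      ‖ψ x * fderiv ℝ (originCutoff r) x (X x)‖ ≤ |M| * (D / r) := by
    filter_upwards [hM, hD r hr] with x hψx hDx _
    rw [norm_mul]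
    exact mul_le_mul (hψx.trans (le_abs_self M)) hDx (norm_nonneg _) (abs_nonneg M)
  rw [← setIntegral_eq_integral_of_forall_compl_eq_zero hsupp]
  calc _ ≤ |M| * (D / r) * μ.real (closedBall (0 : E) (2 * r)) :=
        norm_setIntegral_le_of_norm_le_const_ae' measure_closedBall_lt_top hbound
    _ = |M| * D * 2 ^ (d + 1) * V * r ^ d := by
        rw [Measure.addHaar_real_closedBall' μ _ (by positivity), hdim, mul_pow, pow_succ r]
        change |M| * (D / r) * (2 ^ (d + 1) * (r ^ d * r) * V) = _
        field_simp

end OriginCutoff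

section Removable

variable {E : Type*} [NormedAddCommGroup E] [NormedSpace ℝ E] [FiniteDimensional ℝ E]
  {r : ℝ} {ψ : E → ℝ}

lemma contDiff_originCutoff_mul {n : ℕ∞} (hψ : ContDiffOn ℝ n ψ {0}ᶜ) :
    ContDiff ℝ n fun x => originCutoff r x * ψ x := by
  refine contDiff_iff_contDiffAt.2 fun x => ?_
  obtain rfl | hx := eq_or_ne x 0
  · refine (contDiffAt_const (c := (0 : ℝ))).congr_of_eventuallyEq ?_
    filter_upwards [originCutoff_eventuallyEq_zero (r := r)] with y hy
    rw [hy, Pi.zero_apply, zero_mul]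
  · exact contDiff_originCutoff.contDiffAt.mul
      (hψ.contDiffAt (isOpen_compl_singleton.mem_nhds hx))

lemma originCutoff_mul_nonneg (hψ : ∀ x ≠ 0, 0 ≤ ψ x) (x : E) : 0 ≤ originCutoff r x * ψ x := by
  obtain rfl | hx := eq_or_ne x 0
  · rw [originCutoff_eventuallyEq_zero.eq_of_nhds, Pi.zero_apply, zero_mul]
  · exact mul_nonneg originCutoff_nonneg (hψ x hx)

lemma fderiv_originCutoff_mul_apply {x : E} (hψ : DifferentiableAt ℝ ψ x) (v : E) :
    fderiv ℝ (fun y => originCutoff r y * ψ y) x v =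
      originCutoff r x * fderiv ℝ ψ x v + ψ x * fderiv ℝ (originCutoff r) x v := by
  rw [fderiv_fun_mul ((contDiff_originCutoff (n := 1)).differentiable one_ne_zero x) hψ]
  rfl

variable [MeasurableSpace E] [BorelSpace E] {μ : Measure E} [μ.IsAddHaarMeasure] {X : E → E}
  {w : E → ℝ}

theorem WeakDivGE.integral_mul_le_of_contDiffOn (h : WeakDivGE 1 μ X w) (hE : 2 ≤ finrank ℝ E)
    (hX : AEStronglyMeasurable X μ) {B : ℝ} (hB : ∀ᵐ x ∂μ, ‖X x‖ ≤ B)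
    (hψ : ContDiffOn ℝ 1 ψ {0}ᶜ) (hψc : HasCompactSupport ψ) (hψ0 : ∀ x ≠ 0, 0 ≤ ψ x)
    {M : ℝ} (hM : ∀ᵐ x ∂μ, ‖ψ x‖ ≤ M) (hwψ : Integrable (fun x => w x * ψ x) μ)
    (hXψ : Integrable (fun x => fderiv ℝ ψ x (X x)) μ) :
    ∫ x, w x * ψ x ∂μ ≤ -∫ x, fderiv ℝ ψ x (X x) ∂μ := by
  have : Nontrivial E := nontrivial_of_finrank_pos (zero_lt_two.trans_le hE)
  obtain ⟨D, hD⟩ := exists_ae_norm_fderiv_originCutoff_apply_le hB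
  have hψint : Integrable ψ μ := memLp_one_iff_integrable.1 <| hψc.memLp_of_bound
    (aestronglyMeasurable_of_continuousOn_compl_singleton hψ.continuousOn) M hM
  have hcut (r : ℝ) (hr : 0 < r) : ∫ x, originCutoff r x * (w x * ψ x) ∂μ ≤
      -(∫ x, originCutoff r x * fderiv ℝ ψ x (X x) ∂μ +
        ∫ x, ψ x * fderiv ℝ (originCutoff r) x (X x) ∂μ) := by
    have hgrad : Integrable (fun x => ψ x * fderiv ℝ (originCutoff r) x (X x)) μ :=
      hψint.mul_bdd (aestronglyMeasurable_clm_apply_of_continuous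
        ((contDiff_originCutoff (n := 1)).continuous_fderiv one_ne_zero) hX) (hD r hr)
    have hprod : (fun x => fderiv ℝ (fun y => originCutoff r y * ψ y) x (X x)) =ᵐ[μ] fun x =>
        originCutoff r x * fderiv ℝ ψ x (X x) + ψ x * fderiv ℝ (originCutoff r) x (X x) := by
      filter_upwards [Measure.ae_ne μ 0] with x hx
      exact fderiv_originCutoff_mul_apply ((hψ.contDiffAt
        (isOpen_compl_singleton.mem_nhds hx)).differentiableAt one_ne_zero) _
    rw [← integral_add (integrable_originCutoff_mul hXψ) hgrad, ← integral_congr_ae hprod]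
    simpa only [mul_left_comm] using h _ (contDiff_originCutoff_mul hψ) hψc.mul_left
      (originCutoff_mul_nonneg hψ0)
  have hlim := ((tendsto_integral_originCutoff_mul hXψ).add
    (tendsto_integral_mul_fderiv_originCutoff hE hB hM)).neg
  rw [add_zero] at hlim
  exact le_of_tendsto_of_tendsto (tendsto_integral_originCutoff_mul hwψ) hlim
    (eventually_mem_nhdsWithin.mono hcut)

end Removable

/-! ### The uncertainty principle for vector fields -/

section Uncertainty

variable {E : Type*} [NormedAddCommGroup E] [NormedSpace ℝ E] {ρ u : E → ℝ}

lemma fderiv_mul_sq_apply {x v : E} (hρ : DifferentiableAt ℝ ρ x) (hu : DifferentiableAt ℝ u x) :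
    fderiv ℝ (fun y => ρ y * u y ^ 2) x v =
      fderiv ℝ ρ x v * u x ^ 2 + 2 * (ρ x * u x * fderiv ℝ u x v) := by
  rw [fderiv_fun_mul hρ (hu.fun_pow 2), fderiv_fun_pow 2 hu]
  simp only [Nat.add_one_sub_one, pow_one, nsmul_eq_mul, Nat.cast_ofNat, add_apply, smul_apply,
    smul_eq_mul]
  ring

variable [FiniteDimensional ℝ E] [MeasurableSpace E] [BorelSpace E] {μ : Measure E}

lemma memLp_fderiv_apply_comp [IsFiniteMeasureOnCompacts μ] {p : ℝ≥0∞} (hu : ContDiff ℝ 1 u)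
    (huc : HasCompactSupport u) {X : E → E} (hX : AEStronglyMeasurable X μ) {B : ℝ}
    (hB : ∀ᵐ x ∂μ, ‖X x‖ ≤ B) : MemLp (fun x => fderiv ℝ u x (X x)) p μ := by
  have hu' : Continuous (fderiv ℝ u) := hu.continuous_fderiv one_ne_zero
  obtain ⟨A, hA⟩ := (huc.fderiv ℝ).exists_bound_of_continuous hu'
  exact (hasCompactSupport_fderiv_apply_comp huc X).memLp_of_bound
    (aestronglyMeasurable_clm_apply_of_continuous hu' hX) (A * B)
    (hB.mono fun x hx => ContinuousLinearMap.le_of_opNorm_le_of_le _ (hA x) hx)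

variable [μ.IsAddHaarMeasure]

lemma memLp_mul_of_locally_bddAbove [Nontrivial E] {p : ℝ≥0∞} (hρ : ContinuousOn ρ {0}ᶜ)
    (hρpos : ∀ x ≠ 0, 0 < ρ x) (hρloc : ∀ x, ∃ U ∈ 𝓝 x, BddAbove (ρ '' U)) (hu : Continuous u)
    (huc : HasCompactSupport u) : MemLp (fun x => ρ x * u x) p μ := by
  obtain ⟨M, hM⟩ := exists_forall_norm_mul_le_of_locally_bddAbove hρpos hρloc hu huc
  exact huc.mul_left.memLp_of_bound
    ((aestronglyMeasurable_of_continuousOn_compl_singleton hρ).mul hu.aestronglyMeasurable) M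
    ((Measure.ae_ne μ 0).mono hM)

variable {X : E → E} {B C : ℝ}

lemma integral_sq_le_of_weakDivGE (hE : 2 ≤ finrank ℝ E) (hρ : ContDiffOn ℝ 1 ρ {0}ᶜ)
    (hρpos : ∀ x ≠ 0, 0 < ρ x) (hρloc : ∀ x, ∃ U ∈ 𝓝 x, BddAbove (ρ '' U))
    (hX : AEStronglyMeasurable X μ) (hB : ∀ᵐ x ∂μ, ‖X x‖ ≤ B)
    (hXρ : ∀ᵐ x ∂μ, fderiv ℝ ρ x (X x) = 1) (hdiv : WeakDivGE 1 μ X fun x => C / ρ x)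
    (hu : ContDiff ℝ 1 u) (huc : HasCompactSupport u) :
    (C + 1) * ∫ x, u x ^ 2 ∂μ ≤ -(2 * ∫ x, ρ x * u x * fderiv ℝ u x (X x) ∂μ) := by
  have : Nontrivial E := nontrivial_of_finrank_pos (zero_lt_two.trans_le hE)
  have hu2c : HasCompactSupport fun x => u x ^ 2 := huc.comp_left (zero_pow two_ne_zero)
  have hu2 : Integrable (fun x => u x ^ 2) μ :=
    (hu.continuous.pow 2).integrable_of_hasCompactSupport hu2c
  have hcross : Integrable (fun x => ρ x * u x * fderiv ℝ u x (X x)) μ :=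
    (memLp_mul_of_locally_bddAbove (p := 2) hρ.continuousOn hρpos hρloc hu.continuous
      huc).integrable_mul (memLp_fderiv_apply_comp (p := 2) hu huc hX hB)
  have hweight : (fun x => C / ρ x * (ρ x * u x ^ 2)) =ᵐ[μ] fun x => C * u x ^ 2 := by
    filter_upwards [Measure.ae_ne μ 0] with x hx
    rw [← mul_assoc, div_mul_cancel₀ C (hρpos x hx).ne']
  have hderiv : (fun x => fderiv ℝ (fun y => ρ y * u y ^ 2) x (X x)) =ᵐ[μ]
      fun x => u x ^ 2 + 2 * (ρ x * u x * fderiv ℝ u x (X x)) := by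
    filter_upwards [Measure.ae_ne μ 0, hXρ] with x hx hXx
    rw [fderiv_mul_sq_apply ((hρ.contDiffAt (isOpen_compl_singleton.mem_nhds hx)).differentiableAt
      one_ne_zero) (hu.differentiable one_ne_zero x), hXx, one_mul]
  obtain ⟨M, hM⟩ := exists_forall_norm_mul_le_of_locally_bddAbove hρpos hρloc
    (hu.continuous.pow 2) hu2c
  have htest := hdiv.integral_mul_le_of_contDiffOn hE hX hB (hρ.mul (hu.pow 2).contDiffOn)
    hu2c.mul_left (fun x hx => mul_nonneg (hρpos x hx).le (sq_nonneg _))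
    ((Measure.ae_ne μ 0).mono hM) ((hu2.const_mul C).congr hweight.symm)
    ((hu2.add (hcross.const_mul 2)).congr hderiv.symm)
  rw [integral_congr_ae hweight, integral_congr_ae hderiv, integral_const_mul,
    integral_add hu2 (hcross.const_mul 2), integral_const_mul] at htest
  linarith

theorem finsler_uncertainty_principle_general (hE : 2 ≤ finrank ℝ E)
    (hρ : ContDiffOn ℝ 1 ρ {0}ᶜ) (hρpos : ∀ x ≠ 0, 0 < ρ x)
    (hρloc : ∀ x, ∃ U ∈ 𝓝 x, BddAbove (ρ '' U))
    (hX : AEStronglyMeasurable X μ) (hB : ∀ᵐ x ∂μ, ‖X x‖ ≤ B)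
    (hXρ : ∀ᵐ x ∂μ, fderiv ℝ ρ x (X x) = 1) (hC : -1 ≤ C)
    (hint : LocallyIntegrable (fun x => C / ρ x) μ) (hdiv : WeakDivGE ∞ μ X fun x => C / ρ x)
    (hu : ContDiff ℝ 1 u) (huc : HasCompactSupport u) :
    ((C + 1) / 2) ^ 2 * (∫ x, u x ^ 2 ∂μ) ^ 2 ≤
      (∫ x, ρ x ^ 2 * u x ^ 2 ∂μ) * ∫ x, fderiv ℝ u x (X x) ^ 2 ∂μ := by
  have : Nontrivial E := nontrivial_of_finrank_pos (zero_lt_two.trans_le hE)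
  have hXloc : LocallyIntegrable X μ := (memLp_top_of_bound hX B hB).locallyIntegrable le_top
  have hle := integral_sq_le_of_weakDivGE hE hρ hρpos hρloc hX hB hXρ
    (hdiv.of_smooth hXloc hint) hu huc
  have hu2 : 0 ≤ ∫ x, u x ^ 2 ∂μ := integral_nonneg fun x => sq_nonneg (u x)
  calc ((C + 1) / 2) ^ 2 * (∫ x, u x ^ 2 ∂μ) ^ 2 = ((C + 1) / 2 * ∫ x, u x ^ 2 ∂μ) ^ 2 :=
        (mul_pow _ _ _).symm
    _ ≤ (-∫ x, ρ x * u x * fderiv ℝ u x (X x) ∂μ) ^ 2 :=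
        pow_le_pow_left₀ (mul_nonneg (by linarith) hu2) (by linarith) 2
    _ = (∫ x, ρ x * u x * fderiv ℝ u x (X x) ∂μ) ^ 2 := neg_sq _
    _ ≤ (∫ x, (ρ x * u x) ^ 2 ∂μ) * ∫ x, fderiv ℝ u x (X x) ^ 2 ∂μ := sq_integral_mul_le
        (memLp_mul_of_locally_bddAbove hρ.continuousOn hρpos hρloc hu.continuous huc)
        (memLp_fderiv_apply_comp hu huc hX hB)
    _ = _ := by simp only [mul_pow]

end Uncertainty

/-! ### Finsler norms -/

namespace IsFinslerNorm

variable {N : ℕ} {H : Euc N → ℝ}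

lemma map_zero (hH : IsFinslerNorm H) : H 0 = 0 := by
  simpa only [zero_smul, abs_zero, zero_mul] using hH.homog 0 0

lemma map_add_le (hH : IsFinslerNorm H) (ξ η : Euc N) : H (ξ + η) ≤ H ξ + H η := by
  have hhalf : H ((1 / 2 : ℝ) • ξ + (1 / 2 : ℝ) • η) ≤ 1 / 2 * H ξ + 1 / 2 * H η :=
    hH.convexOn.2 (mem_univ ξ) (mem_univ η) (by norm_num) (by norm_num) (by norm_num)
  rw [← smul_add, hH.homog, abs_of_pos one_half_pos] at hhalf
  linarith

lemma exists_lipschitzWith (hH : IsFinslerNorm H) : ∃ K, LipschitzWith K H := by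
  obtain ⟨_, b, _, _, hb⟩ := hH.bounds
  refine ⟨b.toNNReal, .of_le_add_mul _ fun ξ η => ?_⟩
  calc H ξ = H (η + (ξ - η)) := by rw [add_sub_cancel]
    _ ≤ H η + H (ξ - η) := hH.map_add_le _ _
    _ ≤ H η + b.toNNReal * dist ξ η := by
      rw [dist_eq_norm]
      gcongr
      exact (hb _).2.trans (by gcongr; exact Real.le_coe_toNNReal b)

lemma exists_norm_gradient_le (hH : IsFinslerNorm H) : ∃ B, ∀ ξ, ‖∇ H ξ‖ ≤ B := by
  obtain ⟨K, hK⟩ := hH.exists_lipschitzWith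
  refine ⟨K, fun ξ => ?_⟩
  rw [gradient, LinearIsometryEquiv.norm_map]
  exact norm_fderiv_le_of_lipschitz ℝ hK

lemma fderiv_apply_self (hH : IsFinslerNorm H) {ξ : Euc N} (hξ : ξ ≠ 0) :
    fderiv ℝ H ξ ξ = H ξ :=
  fderiv_apply_self_of_posHomogeneous
    ((hH.smooth.contDiffAt (isOpen_compl_singleton.mem_nhds hξ)).differentiableAt two_ne_zero)
    fun t ht => by rw [hH.homog, abs_of_pos ht, smul_eq_mul]

variable {ρ : Euc N → ℝ}

lemma gradient_ne_zero_of_eikonal (hH : IsFinslerNorm H) {x : Euc N} (hx : H (∇ ρ x) = 1) :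
    ∇ ρ x ≠ 0 := by
  rintro h
  rw [h, hH.map_zero] at hx
  exact zero_ne_one hx

lemma fderiv_apply_gradient_of_eikonal (hH : IsFinslerNorm H) {x : Euc N} (hx : H (∇ ρ x) = 1) :
    fderiv ℝ ρ x (∇ H (∇ ρ x)) = 1 := by
  rw [← inner_gradient_left, real_inner_comm, inner_gradient_left,
    hH.fderiv_apply_self (hH.gradient_ne_zero_of_eikonal hx), hx]

lemma continuousOn_gradient_comp_gradient (hH : IsFinslerNorm H)
    (hρ : ContDiffOn ℝ 1 ρ {0}ᶜ) (heik : ∀ x ≠ 0, H (∇ ρ x) = 1) :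
    ContinuousOn (fun x => ∇ H (∇ ρ x)) {0}ᶜ :=
  (continuousOn_gradient_of_contDiffOn hH.smooth isOpen_compl_singleton one_le_two).comp
    (continuousOn_gradient_of_contDiffOn hρ isOpen_compl_singleton le_rfl)
    fun x hx => hH.gradient_ne_zero_of_eikonal (heik x hx)

end IsFinslerNorm

/-- Anisotropic uncertainty principle inequality. -/
theorem finsler_uncertainty_principle
    (N : ℕ) (hN : 2 ≤ N) (H : Euc N → ℝ) (hH : IsFinslerNorm H)
    (ρ : Euc N → ℝ) (hρ : ContDiffOn ℝ 1 ρ {(0 : Euc N)}ᶜ)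
    (hρpos : ∀ x : Euc N, x ≠ 0 → 0 < ρ x)
    (hρloc : ∀ x : Euc N, ∃ U ∈ 𝓝 x, BddAbove (ρ '' U))
    (heik : ∀ x : Euc N, x ≠ 0 → H (gradient ρ x) = 1)
    (C : ℝ) (hC : 0 < C)
    (hint : LocallyIntegrable (fun x => 1 / ρ x) volume)
    (hsuper : ∀ φ : Euc N → ℝ, IsTestFun (univ : Set (Euc N)) φ → (∀ x, 0 ≤ φ x) →
      ∫ x, (C / ρ x) * φ x ≤ -∫ x, ⟪gradient H (gradient ρ x), gradient φ x⟫)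
    (u : Euc N → ℝ) (hu : IsTestFun (univ : Set (Euc N)) u) :
    ((C + 1) / 2) ^ 2 * (∫ x, |u x| ^ 2) ^ 2
      ≤ (∫ x, ρ x ^ 2 * |u x| ^ 2) *
        ∫ x, |⟪gradient H (gradient ρ x), gradient u x⟫| ^ 2 := by
  have : Nonempty (Fin N) := ⟨⟨0, by lia⟩⟩
  obtain ⟨B, hB⟩ := hH.exists_norm_gradient_le
  have hinner (φ : Euc N → ℝ) (x : Euc N) :
      ⟪∇ H (∇ ρ x), ∇ φ x⟫ = fderiv ℝ φ x (∇ H (∇ ρ x)) := inner_gradient_right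
  simp only [hinner] at hsuper
  simp only [hinner, sq_abs]
  exact finsler_uncertainty_principle_general (by rwa [finrank_euclideanSpace_fin])
    hρ hρpos hρloc
    (aestronglyMeasurable_of_continuousOn_compl_singleton
      (hH.continuousOn_gradient_comp_gradient hρ heik))
    (.of_forall fun x => hB (∇ ρ x))
    ((Measure.ae_ne volume 0).mono fun x hx => hH.fderiv_apply_gradient_of_eikonal (heik x hx))
    (by linarith) (by simpa only [Pi.smul_def, smul_eq_mul, mul_one_div] using hint.smul C)
    (fun φ hφ hφc => hsuper φ ⟨hφ, hφc, subset_univ _⟩)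
    (hu.1.of_le (by exact_mod_cast le_top)) hu.2.1
end
end
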